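/- Let n, d, k be integers with d ≥ 3 and 24 ≤ k ≤ n. Then E[‖ν_k‖_TC] ≥ (7/48)·d·2^n. -/

import Mathlib

open MeasureTheory Finset

noncomputable section

/-- Points of the grid `[2^n]^d` (coordinates taken 0-based). -/
abbrev GridPt (n d : ℕ) := Fin d → Fin (2^n)

/-- Normalized counting "volume" of a subset of the grid: `Vol(A) = 2^{-nd}|A|`. -/
def Vol (n d : ℕ) (A : Finset (GridPt n d)) : ℝ := (A.card : ℝ) / 2^(n*d)

/-- The ℓ1 metric on the grid. -/
def gdist {n d : ℕ} (u v : GridPt n d) : ℝ := ∑ i, |((u i : ℕ) : ℝ) - ((v i : ℕ) : ℝ)|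

/-- Indices of the dyadic cubes in `D_k`. -/
abbrev CubeIdx (d k : ℕ) := Fin d → Fin (2^k)

/-- The dyadic cube of side-cardinality `2^(n-k)` indexed by `j ∈ {0,…,2^k-1}^d`. -/
def cube (n d k : ℕ) (j : CubeIdx d k) : Finset (GridPt n d) :=
  Finset.univ.filter (fun x => ∀ i, (x i : ℕ) / 2^(n-k) = (j i : ℕ))

/-- `p = 2^{-4d}`. -/
def pp (d : ℕ) : ℝ := ((2:ℝ)^(4*d))⁻¹

/-- The law of each `X_Q`: takes values `±1` with probability `p/2` each
and `0` with probability `1-p`. -/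
def stepMeasure (d : ℕ) : Measure ℝ :=
  (Real.toNNReal (pp d / 2)) • Measure.dirac (1:ℝ)
  + (Real.toNNReal (pp d / 2)) • Measure.dirac (-1:ℝ)
  + (Real.toNNReal (1 - pp d)) • Measure.dirac (0:ℝ)

instance (d : ℕ) : IsFiniteMeasure (stepMeasure d) := by
  unfold stepMeasure; infer_instance

/-- The joint law of the i.i.d. family `{X_Q}_{Q ∈ D_k}`; a sample point
`ω : CubeIdx d k → ℝ` records the values `X_Q = ω Q`. -/
def prodMeasure (d k : ℕ) : Measure (CubeIdx d k → ℝ) :=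
  Measure.pi fun _ => stepMeasure d

/-- `μ_k(A) = ∑_{Q ∈ D_k} p⁻¹ 2^k X_Q Vol(A ∩ Q)`, as a function of the sample point `ω`. -/
def muMeas (n d k : ℕ) (A : Finset (GridPt n d)) (ω : CubeIdx d k → ℝ) : ℝ :=
  ∑ j : CubeIdx d k, (pp d)⁻¹ * 2^k * ω j * Vol n d (A ∩ cube n d k j)

/-- `ν_k(A) = μ_k(A) - μ_k([2^n]^d)·Vol(A)`. -/
def nuMeas (n d k : ℕ) (A : Finset (GridPt n d)) (ω : CubeIdx d k → ℝ) : ℝ :=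
  muMeas n d k A ω - muMeas n d k Finset.univ ω * Vol n d A

/-- The transportation cost norm of a signed measure `μ` on the grid (given by its point
masses), via Kantorovich duality: the supremum of `|∫ f dμ|` over `1`-Lipschitz `f`. -/
def tcNorm (n d : ℕ) (μ : GridPt n d → ℝ) : ℝ :=
  sSup {r : ℝ | ∃ f : GridPt n d → ℝ,
    (∀ u v, |f u - f v| ≤ gdist u v) ∧ r = |∑ x, f x * μ x|}

open ProbabilityTheory

/-!
The norm is tested against the distance to the union of the cubes of negative mass, truncated at
height `R = (d / 3) 2^(n - k)`. It vanishes on every negative cube and equals `R` on a positive cube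
if no cube within distance `R` is negative. At most `7 ^ d` cubes are within distance `R` of a given
one and each is negative with probability `p / 2 = 16⁻¹ ^ d / 2`, so a positive cube
is isolated in this way except with probability `(7 / 16) ^ d / 2`. Passing from `μ_k` to `ν_k`
costs at most `R` times the normalized `|∑ X_Q|`, whose expectation is controlled by the standard
deviation `√(2^(kd) p)` of the sum and is negligible against the expected number `2^(kd) p / 2` of
positive cubes.
-/

section TruncatedDistance

variable {X : Type*} [PseudoMetricSpace X] {R : ℝ} {s : Set X} {x : X}

open Classical in
/-- The distance to `s` truncated at height `R`. For `s = ∅` the value is `R`, the truncation of an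
infinite distance, whereas `Metric.infDist x ∅ = 0`. -/
def truncInfDist (R : ℝ) (s : Set X) (x : X) : ℝ :=
  if s.Nonempty then min R (Metric.infDist x s) else R

lemma truncInfDist_le : truncInfDist R s x ≤ R := by
  unfold truncInfDist
  split_ifs
  exacts [min_le_left _ _, le_rfl]

lemma truncInfDist_nonneg (hR : 0 ≤ R) : 0 ≤ truncInfDist R s x := by
  unfold truncInfDist
  split_ifs
  exacts [le_min hR Metric.infDist_nonneg, hR]

lemma truncInfDist_of_mem (hR : 0 ≤ R) (hx : x ∈ s) : truncInfDist R s x = 0 := by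
  rw [truncInfDist, if_pos ⟨x, hx⟩, Metric.infDist_zero_of_mem hx, min_eq_right hR]

lemma truncInfDist_of_forall_le_dist (h : ∀ y ∈ s, R ≤ dist x y) : truncInfDist R s x = R := by
  unfold truncInfDist
  split_ifs with hs
  exacts [min_eq_left ((Metric.le_infDist hs).2 fun {y} hy => h y hy), rfl]

lemma lipschitzWith_truncInfDist (R : ℝ) (s : Set X) : LipschitzWith 1 (truncInfDist R s) := by
  unfold truncInfDist
  split_ifs
  exacts [(Metric.lipschitz_infDist_pt s).const_min R, LipschitzWith.const' R]

end TruncatedDistance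

section TransportationCost

variable {n d : ℕ}

/-- The isometric embedding of the grid into `ℓ1^d`. -/
def gridEmb (x : GridPt n d) : PiLp 1 fun _ : Fin d => ℝ :=
  WithLp.toLp 1 fun i => ((x i : ℕ) : ℝ)

lemma dist_gridEmb (x y : GridPt n d) : dist (gridEmb x) (gridEmb y) = gdist x y := by
  simp only [PiLp.dist_eq_of_L1, gridEmb, gdist, Real.dist_eq]

lemma abs_sum_mul_le_tcNorm {μ : GridPt n d → ℝ} (hμ : ∑ x, μ x = 0) {f : GridPt n d → ℝ}
    (hf : ∀ u v, |f u - f v| ≤ gdist u v) : |∑ x, f x * μ x| ≤ tcNorm n d μ := by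
  refine le_csSup ?_ ⟨f, hf, rfl⟩
  let o : GridPt n d := fun _ => ⟨0, by positivity⟩
  refine ⟨∑ x, gdist x o * |μ x|, ?_⟩
  rintro r ⟨g, hg, rfl⟩
  have recenter : ∑ x, g x * μ x = ∑ x, (g x - g o) * μ x := by
    simp only [sub_mul, sum_sub_distrib, ← mul_sum, hμ, mul_zero, sub_zero]
  rw [recenter]
  refine (abs_sum_le_sum_abs _ _).trans (sum_le_sum fun x _ => ?_)
  rw [abs_mul]
  exact mul_le_mul_of_nonneg_right (hg x o) (abs_nonneg _)

end TransportationCost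

section DyadicCubes

variable {n d k : ℕ}

lemma card_filter_val_div_eq {m s : ℕ} (hs : 0 < s) (j : Fin m) :
    #{x : Fin (m * s) | (x : ℕ) / s = j} = s := by
  have block : {x ∈ range (m * s) | x / s = j} = Ico (j * s) ((j + 1) * s) := by
    ext x
    have hj : (j + 1) * s ≤ m * s := Nat.mul_le_mul_right s j.2
    simp only [mem_filter, mem_range, mem_Ico, Nat.div_eq_iff hs]
    grind
  rw [card_filter, Fin.sum_univ_eq_sum_range (fun x => if x / s = j then 1 else 0), ← card_filter,
    block, Nat.card_Ico, ← Nat.sub_mul, Nat.add_sub_cancel_left, one_mul]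

lemma card_cube (h : k ≤ n) (j : CubeIdx d k) : #(cube n d k j) = 2 ^ ((n - k) * d) := by
  have side (i : Fin d) : #{x : Fin (2 ^ n) | (x : ℕ) / 2 ^ (n - k) = j i} = 2 ^ (n - k) := by
    have hn : 2 ^ n = 2 ^ k * 2 ^ (n - k) := by rw [← pow_add, Nat.add_sub_cancel' h]
    rw [hn]
    exact card_filter_val_div_eq (by positivity) (j i)
  have product : cube n d k j = Fintype.piFinset fun i =>
      {x : Fin (2 ^ n) | (x : ℕ) / 2 ^ (n - k) = j i} := by
    ext x
    simp [cube]
  rw [product, Fintype.card_piFinset, prod_congr rfl fun i _ => side i, prod_const, card_univ,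
    Fintype.card_fin, pow_mul]

/-- The index of the dyadic cube of `D_k` that contains `x`. -/
def cubeIdx (h : k ≤ n) (x : GridPt n d) : CubeIdx d k := fun i =>
  ⟨x i / 2 ^ (n - k), by
    rw [Nat.div_lt_iff_lt_mul (by positivity), ← pow_add, Nat.add_sub_cancel' h]
    exact (x i).2⟩

lemma mem_cube_iff (h : k ≤ n) {x : GridPt n d} {j : CubeIdx d k} :
    x ∈ cube n d k j ↔ cubeIdx h x = j := by
  simp only [cube, mem_filter, mem_univ, true_and, cubeIdx, funext_iff, Fin.ext_iff]

lemma sum_comp_cubeIdx (h : k ≤ n) (g : CubeIdx d k → ℝ) :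
    ∑ x : GridPt n d, g (cubeIdx h x) = 2 ^ ((n - k) * d) * ∑ j, g j := by
  rw [← sum_fiberwise univ (cubeIdx h), mul_sum]
  refine sum_congr rfl fun j _ => ?_
  have fiber : ({x | cubeIdx h x = j} : Finset (GridPt n d)) = cube n d k j := by
    ext x
    simp [mem_cube_iff h]
  rw [sum_congr rfl fun x hx => congrArg g (mem_filter.1 hx).2, sum_const, fiber, card_cube h,
    nsmul_eq_mul, Nat.cast_pow, Nat.cast_ofNat]

lemma muMeas_singleton (h : k ≤ n) (x : GridPt n d) (ω : CubeIdx d k → ℝ) :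
    muMeas n d k {x} ω = (pp d)⁻¹ * 2 ^ k / 2 ^ (n * d) * ω (cubeIdx h x) := by
  have vol (j : CubeIdx d k) :
      Vol n d ({x} ∩ cube n d k j) = if j = cubeIdx h x then 1 / 2 ^ (n * d) else 0 := by
    split_ifs with hj
    · rw [singleton_inter_of_mem ((mem_cube_iff h).2 hj.symm)]
      simp [Vol]
    · rw [singleton_inter_of_notMem (mt (mem_cube_iff h).1 (Ne.symm hj))]
      simp [Vol]
  simp only [muMeas, vol, mul_ite, mul_zero, sum_ite_eq', mem_univ, if_true]
  ring

lemma muMeas_univ (h : k ≤ n) (ω : CubeIdx d k → ℝ) :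
    muMeas n d k univ ω = (pp d)⁻¹ * 2 ^ k * ((∑ j, ω j) / 2 ^ (k * d)) := by
  have vol (j : CubeIdx d k) : Vol n d (univ ∩ cube n d k j) = 1 / 2 ^ (k * d) := by
    rw [univ_inter, Vol, card_cube h, ← Nat.add_sub_cancel' h, add_mul, pow_add,
      Nat.add_sub_cancel_left]
    push_cast
    field_simp
  simp only [muMeas, vol, mul_one_div, sum_div, mul_sum, mul_div_assoc]

lemma nuMeas_singleton (h : k ≤ n) (x : GridPt n d) (ω : CubeIdx d k → ℝ) :
    nuMeas n d k {x} ω =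
      (pp d)⁻¹ * 2 ^ k / 2 ^ (n * d) * (ω (cubeIdx h x) - (∑ j, ω j) / 2 ^ (k * d)) := by
  rw [nuMeas, muMeas_singleton h, muMeas_univ h, Vol, card_singleton, Nat.cast_one]
  ring

lemma sum_nuMeas_singleton (h : k ≤ n) (ω : CubeIdx d k → ℝ) :
    ∑ x, nuMeas n d k {x} ω = 0 := by
  simp only [nuMeas_singleton h, ← mul_sum, sum_sub_distrib, sum_comp_cubeIdx h, sum_const,
    card_univ, Fintype.card_pi, Fintype.card_fin, prod_const, nsmul_eq_mul]
  have hcard : ((((2 ^ n) ^ d : ℕ) : ℝ)) = 2 ^ ((n - k) * d) * 2 ^ (k * d) := by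
    rw [← pow_mul, ← pow_add, ← add_mul, Nat.sub_add_cancel h, Nat.cast_pow, Nat.cast_ofNat]
  have hcancel : (2 : ℝ) ^ (k * d) * ((∑ j, ω j) / 2 ^ (k * d)) = ∑ j, ω j :=
    mul_div_cancel₀ _ (by positivity)
  rw [hcard, mul_assoc (2 ^ ((n - k) * d)), hcancel, sub_self, mul_zero]

end DyadicCubes

section CellGap

/-- The number of integers strictly between `a` and `b`. -/
def gap (a b : ℕ) : ℕ := (a - b - 1) + (b - a - 1)

lemma mul_gap_div_le_abs_sub (s a b : ℕ) :
    (s : ℝ) * gap (a / s) (b / s) ≤ |(a : ℝ) - b| := by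
  wlog hab : a ≤ b generalizing a b
  · rw [abs_sub_comm, gap, add_comm]
    exact this b a (le_of_not_ge hab)
  rcases s.eq_zero_or_pos with rfl | hs
  · simp
  have ha : a < s * (a / s + 1) := Nat.lt_mul_div_succ a hs
  have hb : s * (b / s) ≤ b := Nat.mul_div_le b s
  have hdiv : a / s ≤ b / s := Nat.div_le_div_right hab
  have key : s * gap (a / s) (b / s) + a ≤ b := by
    rcases hdiv.eq_or_lt with heq | hlt
    · simpa [gap, heq] using hab
    · have hgap : gap (a / s) (b / s) + (a / s + 1) = b / s := by
        unfold gap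
        omega
      rw [← hgap, mul_add] at hb
      omega
  have key' : (s : ℝ) * gap (a / s) (b / s) + a ≤ b := mod_cast key
  rw [abs_sub_comm]
  linarith [le_abs_self ((b : ℝ) - a)]

lemma sum_range_pow_gap_le {r : ℝ} (hr₀ : 0 ≤ r) (hr₁ : r < 1) (a m : ℕ) :
    ∑ j ∈ range m, r ^ gap a j ≤ 1 + 2 / (1 - r) := by
  have below : ∑ j ∈ range a, r ^ gap a j = ∑ i ∈ range a, r ^ i := by
    rw [← sum_range_reflect]
    refine sum_congr rfl fun j hj => congrArg (r ^ ·) ?_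
    have := mem_range.1 hj
    unfold gap
    omega
  have above : ∑ i ∈ range m, r ^ gap a (a + 1 + i) = ∑ i ∈ range m, r ^ i := by
    refine sum_congr rfl fun i _ => congrArg (r ^ ·) ?_
    unfold gap
    omega
  have geom (N : ℕ) : ∑ i ∈ range N, r ^ i ≤ 1 / (1 - r) := by
    simpa using geom_sum_Ico_le_of_lt_one (m := 0) (n := N) hr₀ hr₁
  calc ∑ j ∈ range m, r ^ gap a j ≤ ∑ j ∈ range (a + 1 + m), r ^ gap a j :=
        sum_le_sum_of_subset_of_nonneg (range_mono (by omega)) fun _ _ _ => by positivity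
    _ = ∑ i ∈ range a, r ^ i + 1 + ∑ i ∈ range m, r ^ i := by
        rw [sum_range_add, sum_range_succ, below, above]
        simp [gap]
    _ ≤ 1 + 2 / (1 - r) := by
        linear_combination geom a + geom m

/-- Rankin's trick: the indicator of `{∑ i, w i (j i) ≤ m}` is at most `b ^ (m - ∑ i, w i (j i))`,
and the sum of the latter over all `j` factors over the coordinates. -/
lemma card_filter_sum_le_le_pow_mul_prod {ι κ : Type*} [Fintype ι] [DecidableEq ι] [Fintype κ]
    {b : ℝ} (hb : 1 ≤ b) (w : ι → κ → ℕ) (m : ℕ) :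
    (#{j : ι → κ | ∑ i, w i (j i) ≤ m} : ℝ) ≤ b ^ m * ∏ i, ∑ j, b⁻¹ ^ w i j := by
  have : 0 < b := by linarith
  calc (#{j : ι → κ | ∑ i, w i (j i) ≤ m} : ℝ)
      = ∑ j : ι → κ with ∑ i, w i (j i) ≤ m, 1 := by simp
    _ ≤ ∑ j : ι → κ with ∑ i, w i (j i) ≤ m, b ^ m * ∏ i, b⁻¹ ^ w i (j i) := by
        refine sum_le_sum fun j hj => ?_
        rw [prod_pow_eq_pow_sum, inv_pow, ← div_eq_mul_inv, one_le_div (by positivity)]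
        exact pow_le_pow_right₀ hb (mem_filter.1 hj).2
    _ ≤ ∑ j : ι → κ, b ^ m * ∏ i, b⁻¹ ^ w i (j i) :=
        sum_le_sum_of_subset_of_nonneg (filter_subset _ _) fun _ _ _ => by positivity
    _ = b ^ m * ∏ i, ∑ j, b⁻¹ ^ w i j := by rw [Fintype.prod_sum, mul_sum]

variable {ι : Type*} [Fintype ι] {m : ℕ}

/-- The `ℓ1` separation of two cells of `[m]^ι`: times the side length of a cell, a lower bound for
the distance between points of these cells. -/
def cellGap (a b : ι → Fin m) : ℕ := ∑ i, gap (a i) (b i)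

lemma mul_cellGap_le_gdist {n d k : ℕ} (h : k ≤ n) (x y : GridPt n d) :
    (2 : ℝ) ^ (n - k) * cellGap (cubeIdx h x) (cubeIdx h y) ≤ gdist x y := by
  rw [cellGap, gdist, Nat.cast_sum, mul_sum]
  exact sum_le_sum fun i _ => mod_cast mul_gap_div_le_abs_sub (2 ^ (n - k)) (x i) (y i)

variable [DecidableEq ι]

/-- The cells whose `ℓ1` separation from `a` is at most a third of the dimension. -/
def nearCells (a : ι → Fin m) : Finset (ι → Fin m) := {b | 3 * cellGap a b ≤ Fintype.card ι}

lemma card_nearCells_le (a : ι → Fin m) : (#(nearCells a) : ℝ) ≤ 7 ^ Fintype.card ι := by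
  have coord (i : ι) : ∑ j : Fin m, (2 : ℝ)⁻¹ ^ (3 * gap (a i) j) ≤ 7 / 2 := by
    simp only [pow_mul]
    rw [Fin.sum_univ_eq_sum_range (fun j => ((2 : ℝ)⁻¹ ^ 3) ^ gap (a i) j)]
    refine (sum_range_pow_gap_le (by norm_num) (by norm_num) _ _).trans (by norm_num)
  calc (#(nearCells a) : ℝ)
      ≤ 2 ^ Fintype.card ι * ∏ i, ∑ j : Fin m, (2 : ℝ)⁻¹ ^ (3 * gap (a i) j) := by
        simp only [nearCells, cellGap, mul_sum]
        exact card_filter_sum_le_le_pow_mul_prod one_le_two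
          (fun i (j : Fin m) => 3 * gap (a i) j) _
    _ ≤ 2 ^ Fintype.card ι * ∏ _i : ι, (7 / 2 : ℝ) := by
        gcongr with i
        exact coord i
    _ = 7 ^ Fintype.card ι := by
        rw [prod_const, card_univ, ← mul_pow]
        norm_num

end CellGap

section PairingBound

variable {n d k : ℕ}

/-- A cube `a` carrying positive mass none of whose near cubes carries negative mass. -/
def IsIsolatedSource (ω : CubeIdx d k → ℝ) (a : CubeIdx d k) : Prop :=
  ω a = 1 ∧ ∀ b ∈ (nearCells a).erase a, ω b ≠ -1

/-- The test function of the lower bound: the distance to the union of the cubes carrying negative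
mass, truncated at `d / 3` times the side length of a cube. -/
def sinkDist (h : k ≤ n) (ω : CubeIdx d k → ℝ) (x : GridPt n d) : ℝ :=
  truncInfDist (d / 3 * 2 ^ (n - k)) (Set.image gridEmb {y | ω (cubeIdx h y) = -1}) (gridEmb x)

lemma abs_sinkDist_sub_le (h : k ≤ n) (ω : CubeIdx d k → ℝ) (u v : GridPt n d) :
    |sinkDist h ω u - sinkDist h ω v| ≤ gdist u v := by
  rw [← dist_gridEmb]
  simpa [sinkDist, Real.dist_eq] using
    (lipschitzWith_truncInfDist _ _).dist_le_mul (gridEmb u) (gridEmb v)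

lemma sinkDist_le (h : k ≤ n) (ω : CubeIdx d k → ℝ) (x : GridPt n d) :
    sinkDist h ω x ≤ d / 3 * 2 ^ (n - k) := truncInfDist_le

lemma sinkDist_nonneg (h : k ≤ n) (ω : CubeIdx d k → ℝ) (x : GridPt n d) : 0 ≤ sinkDist h ω x :=
  truncInfDist_nonneg (by positivity)

lemma sinkDist_eq_zero (h : k ≤ n) {ω : CubeIdx d k → ℝ} {x : GridPt n d}
    (hx : ω (cubeIdx h x) = -1) : sinkDist h ω x = 0 :=
  truncInfDist_of_mem (by positivity) (Set.mem_image_of_mem _ hx)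

lemma sinkDist_eq_of_isIsolatedSource (h : k ≤ n) {ω : CubeIdx d k → ℝ} {x : GridPt n d}
    (hx : IsIsolatedSource ω (cubeIdx h x)) : sinkDist h ω x = d / 3 * 2 ^ (n - k) := by
  refine truncInfDist_of_forall_le_dist ?_
  rintro _ ⟨y, hy, rfl⟩
  have hne : cubeIdx h y ≠ cubeIdx h x := by
    intro heq
    have hsource : ω (cubeIdx h y) = 1 := heq ▸ hx.1
    have hsink : ω (cubeIdx h y) = -1 := hy
    linarith
  have hfar : cubeIdx h y ∉ nearCells (cubeIdx h x) := fun hmem =>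
    hx.2 _ (mem_erase.2 ⟨hne, hmem⟩) hy
  have hgap : (d : ℝ) ≤ 3 * cellGap (cubeIdx h x) (cubeIdx h y) := by
    simp only [nearCells, mem_filter, mem_univ, true_and, Fintype.card_fin, not_le] at hfar
    exact mod_cast hfar.le
  calc (d : ℝ) / 3 * 2 ^ (n - k)
      ≤ cellGap (cubeIdx h x) (cubeIdx h y) * 2 ^ (n - k) := by gcongr; linarith
    _ = 2 ^ (n - k) * cellGap (cubeIdx h x) (cubeIdx h y) := mul_comm _ _
    _ ≤ gdist x y := mul_cellGap_le_gdist h x y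
    _ = dist (gridEmb x) (gridEmb y) := (dist_gridEmb x y).symm

open Classical in
lemma card_isIsolatedSource_mul_le_sum_sinkDist_mul (h : k ≤ n) {ω : CubeIdx d k → ℝ}
    (hω : ∀ j, ω j = 1 ∨ ω j = -1 ∨ ω j = 0) :
    2 ^ ((n - k) * d) * (d / 3 * 2 ^ (n - k)) * #{a | IsIsolatedSource ω a} ≤
      ∑ x, sinkDist h ω x * ω (cubeIdx h x) := by
  have pointwise (x : GridPt n d) :
      (if IsIsolatedSource ω (cubeIdx h x) then (d : ℝ) / 3 * 2 ^ (n - k) else 0) ≤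
        sinkDist h ω x * ω (cubeIdx h x) := by
    split_ifs with hx
    · rw [hx.1, mul_one, sinkDist_eq_of_isIsolatedSource h hx]
    · rcases hω (cubeIdx h x) with h1 | h1 | h1
      · simpa [h1] using sinkDist_nonneg h ω x
      · simp [sinkDist_eq_zero h h1]
      · simp [h1]
  refine le_of_eq_of_le ?_ (sum_le_sum fun x _ => pointwise x)
  rw [sum_comp_cubeIdx h fun a =>
    if IsIsolatedSource ω a then (d : ℝ) / 3 * 2 ^ (n - k) else 0, ← sum_filter, sum_const,
    nsmul_eq_mul]
  ring

lemma sum_mul_sum_sinkDist_le (h : k ≤ n) (ω : CubeIdx d k → ℝ) :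
    (∑ j, ω j) / 2 ^ (k * d) * ∑ x, sinkDist h ω x ≤
      2 ^ ((n - k) * d) * (d / 3 * 2 ^ (n - k)) * |∑ j, ω j| := by
  have htotal : ∑ x, sinkDist h ω x ≤ 2 ^ (n * d) * (d / 3 * 2 ^ (n - k)) := by
    refine (sum_le_card_nsmul univ _ _ fun x _ => sinkDist_le h ω x).trans_eq ?_
    simp [pow_mul]
  calc (∑ j, ω j) / 2 ^ (k * d) * ∑ x, sinkDist h ω x
      ≤ |∑ j, ω j| / 2 ^ (k * d) * (2 ^ (n * d) * (d / 3 * 2 ^ (n - k))) := by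
        gcongr
        exacts [sum_nonneg fun x _ => sinkDist_nonneg h ω x, le_abs_self _]
    _ = 2 ^ ((n - k) * d) * (d / 3 * 2 ^ (n - k)) * |∑ j, ω j| := by
        have hsplit : (2 : ℝ) ^ (n * d) = 2 ^ (k * d) * 2 ^ ((n - k) * d) := by
          rw [← pow_add, ← add_mul, Nat.add_sub_cancel' h]
        rw [hsplit]
        field_simp

lemma pp_pos (d : ℕ) : 0 < pp d := by
  unfold pp
  positivity

open Classical in
lemma card_isIsolatedSource_sub_abs_sum_le_tcNorm (h : k ≤ n) {ω : CubeIdx d k → ℝ}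
    (hω : ∀ j, ω j = 1 ∨ ω j = -1 ∨ ω j = 0) :
    d / 3 * 2 ^ n / (2 ^ (k * d) * pp d) * (#{a | IsIsolatedSource ω a} - |∑ j, ω j|) ≤
      tcNorm n d fun x => nuMeas n d k {x} ω := by
  have hp := pp_pos d
  have hexp : d / 3 * 2 ^ n / (2 ^ (k * d) * pp d) =
      (pp d)⁻¹ * 2 ^ k / 2 ^ (n * d) * (2 ^ ((n - k) * d) * (d / 3 * 2 ^ (n - k))) := by
    obtain ⟨m, rfl⟩ := Nat.exists_eq_add_of_le h
    rw [Nat.add_sub_cancel_left, add_mul, pow_add, pow_add]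
    field_simp
  calc _ ≤ (pp d)⁻¹ * 2 ^ k / 2 ^ (n * d) * (∑ x, sinkDist h ω x * ω (cubeIdx h x) -
          (∑ j, ω j) / 2 ^ (k * d) * ∑ x, sinkDist h ω x) := by
        rw [hexp, mul_assoc, mul_sub]
        exact mul_le_mul_of_nonneg_left (sub_le_sub
          (card_isIsolatedSource_mul_le_sum_sinkDist_mul h hω) (sum_mul_sum_sinkDist_le h ω))
          (by positivity)
    _ = ∑ x, sinkDist h ω x * nuMeas n d k {x} ω := by
        rw [mul_sum univ (sinkDist h ω), ← sum_sub_distrib, mul_sum]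
        refine sum_congr rfl fun x _ => ?_
        rw [nuMeas_singleton h]
        ring
    _ ≤ tcNorm n d fun x => nuMeas n d k {x} ω :=
        (le_abs_self _).trans
          (abs_sum_mul_le_tcNorm (sum_nuMeas_singleton h ω) (abs_sinkDist_sub_le h ω))

end PairingBound

section ProductMeasures

variable {Ω : Type*} [MeasurableSpace Ω]

lemma integrable_of_ae_mem_finite [MeasurableSingletonClass Ω] {μ : Measure Ω} [IsFiniteMeasure μ]
    {s : Set Ω} (hs : s.Finite) (h : ∀ᵐ ω ∂μ, ω ∈ s) (f : Ω → ℝ) : Integrable f μ := by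
  have hf : IntegrableOn f s μ := .of_finite hs
  rwa [IntegrableOn, Measure.restrict_eq_self_of_ae_mem h] at hf

lemma integral_abs_le_sqrt_integral_sq {μ : Measure Ω} [IsProbabilityMeasure μ] {X : Ω → ℝ}
    (hX : MemLp X 2 μ) : ∫ ω, |X ω| ∂μ ≤ √(∫ ω, X ω ^ 2 ∂μ) := by
  have hvar := variance_eq_sub hX.abs
  have hnonneg := variance_nonneg |X| μ
  refine Real.le_sqrt_of_sq_le ?_
  simp only [Pi.pow_apply, Pi.abs_apply, sq_abs] at hvar
  linarith

variable {ι : Type*} [Fintype ι]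

lemma integral_abs_sum_pi_le {μ : Measure ℝ} [IsProbabilityMeasure μ] (hμ : MemLp id 2 μ)
    (hmean : ∫ t, t ∂μ = 0) :
    ∫ ω : ι → ℝ, |∑ i, ω i| ∂Measure.pi (fun _ => μ) ≤ √(Fintype.card ι * ∫ t, t ^ 2 ∂μ) := by
  have hcoord (i : ι) : MemLp (fun ω : ι → ℝ => ω i) 2 (Measure.pi fun _ => μ) :=
    hμ.comp_measurePreserving (measurePreserving_eval _ i)
  have hsum : MemLp (fun ω : ι → ℝ => ∑ i, ω i) 2 (Measure.pi fun _ => μ) :=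
    memLp_finsetSum univ fun i _ => hcoord i
  have hmean_sum : ∫ ω : ι → ℝ, ∑ i, ω i ∂Measure.pi (fun _ => μ) = 0 := by
    rw [integral_finsetSum _ fun i _ => (hcoord i).integrable one_le_two]
    refine sum_eq_zero fun i _ => ?_
    exact (integral_comp_eval (μ := fun _ : ι => μ) (i := i) hμ.1).trans hmean
  have hsq : ∫ ω : ι → ℝ, (∑ i, ω i) ^ 2 ∂Measure.pi (fun _ => μ) =
      Fintype.card ι * ∫ t, t ^ 2 ∂μ := by
    have hvar := variance_sum_pi (X := fun _ : ι => id) fun _ => hμ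
    rw [sum_fn] at hvar
    simp only [id_eq] at hvar
    rw [variance_of_integral_eq_zero hsum.aemeasurable hmean_sum] at hvar
    rw [hvar, sum_const, card_univ, nsmul_eq_mul,
      variance_of_integral_eq_zero hμ.aemeasurable hmean]
    simp
  exact hsq ▸ integral_abs_le_sqrt_integral_sq hsum

open Classical in
lemma integral_card_filter {μ : Measure Ω} [IsFiniteMeasure μ] {P : Ω → ι → Prop}
    (hP : ∀ i, MeasurableSet {ω | P ω i}) :
    ∫ ω, (#{i | P ω i} : ℝ) ∂μ = ∑ i, μ.real {ω | P ω i} := by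
  have hcard (ω : Ω) : (#{i | P ω i} : ℝ) = ∑ i, {ω | P ω i}.indicator (fun _ => (1 : ℝ)) ω := by
    simp [Set.indicator_apply]
  simp_rw [hcard]
  rw [integral_finsetSum _ fun i _ => (integrable_const (1 : ℝ)).indicator (hP i)]
  exact sum_congr rfl fun i _ => integral_indicator_one (hP i)

lemma measureReal_pi_mem_and_forall_mem {μ : Measure Ω} [IsProbabilityMeasure μ]
    {a : ι} {s : Finset ι} (ha : a ∉ s) (A B : Set Ω) :
    (Measure.pi fun _ : ι => μ).real {ω | ω a ∈ A ∧ ∀ b ∈ s, ω b ∈ B} =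
      μ.real A * μ.real B ^ #s := by
  classical
  have hbox : {ω : ι → Ω | ω a ∈ A ∧ ∀ b ∈ s, ω b ∈ B} =
      (↑(insert a s) : Set ι).pi fun b => if b = a then A else B := by
    ext ω
    simp only [coe_insert, Set.insert_pi, if_pos]
    refine and_congr Iff.rfl (forall₂_congr fun b hb => ?_)
    simp only [if_neg (ne_of_mem_of_not_mem hb ha)]
  rw [measureReal_def, hbox, Measure.pi_pi_finset, prod_insert ha, if_pos rfl,
    prod_congr rfl fun b hb => by rw [if_neg (ne_of_mem_of_not_mem hb ha)], prod_const,
    ENNReal.toReal_mul, ENNReal.toReal_pow]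
  rfl

end ProductMeasures

section RandomMasses

lemma pp_le_one (d : ℕ) : pp d ≤ 1 :=
  inv_le_one_of_one_le₀ (one_le_pow₀ one_le_two)

lemma integrable_stepMeasure (d : ℕ) (f : ℝ → ℝ) : Integrable f (stepMeasure d) := by
  have hdirac (c : NNReal) (a : ℝ) : Integrable f (c • Measure.dirac a) :=
    (integrable_dirac (by simp)).smul_measure_nnreal
  exact ((hdirac _ _).add_measure (hdirac _ _)).add_measure (hdirac _ _)

lemma integral_stepMeasure (d : ℕ) (f : ℝ → ℝ) :
    ∫ t, f t ∂stepMeasure d = pp d / 2 * f 1 + pp d / 2 * f (-1) + (1 - pp d) * f 0 := by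
  have hp := pp_pos d
  have hp' := pp_le_one d
  have hf := integrable_stepMeasure d f
  simp only [stepMeasure, integrable_add_measure] at hf
  rw [stepMeasure, integral_add_measure (hf.1.1.add_measure hf.1.2) hf.2,
    integral_add_measure hf.1.1 hf.1.2]
  simp only [integral_smul_nnreal_measure, integral_dirac, NNReal.smul_def, smul_eq_mul]
  rw [Real.coe_toNNReal _ (by linarith), Real.coe_toNNReal _ (by linarith)]

instance (d : ℕ) : IsProbabilityMeasure (stepMeasure d) := by
  have h := integral_stepMeasure d fun _ => 1
  rw [integral_const, smul_eq_mul, mul_one] at h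
  exact isProbabilityMeasure_iff_real.2 (h.trans (by ring))

lemma stepMeasure_real {d : ℕ} {s : Set ℝ} (hs : MeasurableSet s) :
    (stepMeasure d).real s = pp d / 2 * s.indicator 1 1 + pp d / 2 * s.indicator 1 (-1) +
      (1 - pp d) * s.indicator 1 0 := by
  rw [← integral_indicator_one hs, integral_stepMeasure]

lemma ae_stepMeasure (d : ℕ) : ∀ᵐ t ∂stepMeasure d, t = 1 ∨ t = -1 ∨ t = 0 := by
  have hdirac (c : NNReal) {a : ℝ} (ha : a = 1 ∨ a = -1 ∨ a = 0) :
      ∀ᵐ t ∂(c • Measure.dirac a), t = 1 ∨ t = -1 ∨ t = 0 := by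
    refine Measure.ae_smul_measure ?_ c
    rwa [ae_dirac_eq]
  simp only [stepMeasure, ae_add_measure_iff]
  exact ⟨⟨hdirac _ (by simp), hdirac _ (by simp)⟩, hdirac _ (by simp)⟩

variable {d k : ℕ}

instance : IsProbabilityMeasure (prodMeasure d k) :=
  inferInstanceAs (IsProbabilityMeasure (Measure.pi fun _ => stepMeasure d))

lemma ae_prodMeasure : ∀ᵐ ω ∂prodMeasure d k, ∀ j, ω j = 1 ∨ ω j = -1 ∨ ω j = 0 :=
  ae_all_iff.2 fun j => (Measure.tendsto_eval_ae_ae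
    (μ := fun _ : CubeIdx d k => stepMeasure d) (i := j)).eventually (ae_stepMeasure d)

lemma integrable_prodMeasure (F : (CubeIdx d k → ℝ) → ℝ) : Integrable F (prodMeasure d k) := by
  have hfinite : (Set.univ.pi fun _ : CubeIdx d k => ({1, -1, 0} : Set ℝ)).Finite :=
    Set.Finite.pi fun _ => by simp
  refine integrable_of_ae_mem_finite hfinite ?_ F
  filter_upwards [ae_prodMeasure] with ω hω
  simpa using hω

lemma integral_abs_sum_prodMeasure_le :
    ∫ ω, |∑ j, ω j| ∂prodMeasure d k ≤ √(2 ^ (k * d) * pp d) := by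
  have hmemLp : MemLp id 2 (stepMeasure d) :=
    (memLp_two_iff_integrable_sq aestronglyMeasurable_id).2 (integrable_stepMeasure d _)
  have hmean : ∫ t, t ∂stepMeasure d = 0 := by
    rw [integral_stepMeasure]
    ring
  have hsq : ∫ t, t ^ 2 ∂stepMeasure d = pp d := by
    rw [integral_stepMeasure]
    ring
  refine (integral_abs_sum_pi_le hmemLp hmean).trans_eq ?_
  rw [hsq]
  simp [pow_mul]

lemma measureReal_isIsolatedSource_ge (a : CubeIdx d k) :
    pp d / 2 * (1 - (7 / 16) ^ d / 2) ≤ (prodMeasure d k).real {ω | IsIsolatedSource ω a} := by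
  have hp := pp_pos d
  have hp' := pp_le_one d
  have hsource : (stepMeasure d).real {1} = pp d / 2 := by
    rw [stepMeasure_real (measurableSet_singleton _)]
    norm_num [Set.indicator_apply]
  have hsink : (stepMeasure d).real {-1}ᶜ = 1 - pp d / 2 := by
    rw [stepMeasure_real (measurableSet_singleton _).compl]
    have hvalues : (1 : ℝ) ∈ ({-1}ᶜ : Set ℝ) ∧ (-1 : ℝ) ∉ ({-1}ᶜ : Set ℝ) ∧
        (0 : ℝ) ∈ ({-1}ᶜ : Set ℝ) := by norm_num
    rw [Set.indicator_of_mem hvalues.1, Set.indicator_of_notMem hvalues.2.1,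
      Set.indicator_of_mem hvalues.2.2]
    simp only [Pi.one_apply]
    ring
  have hnear : (#((nearCells a).erase a) : ℝ) * (pp d / 2) ≤ (7 / 16) ^ d / 2 := by
    have hcard : (#((nearCells a).erase a) : ℝ) ≤ 7 ^ d := by
      simpa using (Nat.cast_le.2 card_erase_le).trans (card_nearCells_le a)
    have hpp : (7 : ℝ) ^ d * pp d = (7 / 16) ^ d := by
      rw [pp, pow_mul, ← div_eq_mul_inv, ← div_pow]
      norm_num
    rw [← hpp, mul_div_assoc]
    gcongr
  calc pp d / 2 * (1 - (7 / 16) ^ d / 2)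
      ≤ pp d / 2 * (1 + #((nearCells a).erase a) * -(pp d / 2)) := by
        gcongr
        linarith
    _ ≤ pp d / 2 * (1 + -(pp d / 2)) ^ #((nearCells a).erase a) := by
        gcongr
        exact one_add_mul_le_pow (by linarith) _
    _ = (prodMeasure d k).real {ω | IsIsolatedSource ω a} := by
        rw [← sub_eq_add_neg, ← hsink, ← hsource]
        exact (measureReal_pi_mem_and_forall_mem (notMem_erase a _) _ _).symm

open Classical in
lemma integral_card_isIsolatedSource_ge :
    2 ^ (k * d) * pp d / 2 * (1 - (7 / 16) ^ d / 2) ≤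
      ∫ ω, (#{a : CubeIdx d k | IsIsolatedSource ω a} : ℝ) ∂prodMeasure d k := by
  have hmeas (a : CubeIdx d k) : MeasurableSet {ω : CubeIdx d k → ℝ | IsIsolatedSource ω a} := by
    unfold IsIsolatedSource
    measurability
  rw [integral_card_filter hmeas]
  refine le_of_eq_of_le ?_ (sum_le_sum fun a _ => measureReal_isIsolatedSource_ge a)
  have hcard : Fintype.card (CubeIdx d k) = 2 ^ (k * d) := by simp [pow_mul]
  rw [sum_const, card_univ, hcard, nsmul_eq_mul]
  push_cast
  ring

lemma seven_div_sixteen_le_sub_inv_sqrt {d k : ℕ} (hd : 3 ≤ d) (hk : 8 ≤ k) :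
    7 / 16 ≤ (1 - (7 / 16 : ℝ) ^ d / 2) / 2 - (√(2 ^ (k * d) * pp d))⁻¹ := by
  have hpow : (7 / 16 : ℝ) ^ d ≤ (7 / 16) ^ 3 :=
    pow_le_pow_of_le_one (by norm_num) (by norm_num) hd
  have hvariance : (32 : ℝ) ^ 2 ≤ 2 ^ (k * d) * pp d := by
    have hexp : 10 + 4 * d ≤ k * d := by nlinarith
    rw [pp, ← div_eq_mul_inv, le_div_iff₀ (by positivity)]
    calc (32 : ℝ) ^ 2 * 2 ^ (4 * d) = 2 ^ (10 + 4 * d) := by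
          rw [pow_add]
          norm_num
      _ ≤ 2 ^ (k * d) := pow_le_pow_right₀ one_le_two hexp
  have hsqrt : (√(2 ^ (k * d) * pp d))⁻¹ ≤ 32⁻¹ :=
    inv_anti₀ (by norm_num) (Real.le_sqrt_of_sq_le hvariance)
  linarith

end RandomMasses

theorem expected_tc_norm_ge_general (n d k : ℕ) (hkn : k ≤ n) :
    ∫ ω, tcNorm n d (fun x => nuMeas n d k {x} ω) ∂(prodMeasure d k) ≥
      d / 3 * 2 ^ n * ((1 - (7 / 16) ^ d / 2) / 2 - (√(2 ^ (k * d) * pp d))⁻¹) := by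
  classical
  have hp := pp_pos d
  have hscale : 0 ≤ d / 3 * 2 ^ n / (2 ^ (k * d) * pp d) := by positivity
  calc d / 3 * 2 ^ n * ((1 - (7 / 16) ^ d / 2) / 2 - (√(2 ^ (k * d) * pp d))⁻¹)
      = d / 3 * 2 ^ n / (2 ^ (k * d) * pp d) *
          (2 ^ (k * d) * pp d / 2 * (1 - (7 / 16) ^ d / 2) - √(2 ^ (k * d) * pp d)) := by
        rw [← Real.sqrt_div_self]
        field_simp
    _ ≤ d / 3 * 2 ^ n / (2 ^ (k * d) * pp d) *
          (∫ ω, (#{a : CubeIdx d k | IsIsolatedSource ω a} : ℝ) ∂prodMeasure d k -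
            ∫ ω, |∑ j, ω j| ∂prodMeasure d k) :=
        mul_le_mul_of_nonneg_left
          (sub_le_sub integral_card_isIsolatedSource_ge integral_abs_sum_prodMeasure_le) hscale
    _ = ∫ ω, d / 3 * 2 ^ n / (2 ^ (k * d) * pp d) *
          (#{a | IsIsolatedSource ω a} - |∑ j, ω j|) ∂prodMeasure d k := by
        rw [integral_const_mul, integral_sub (integrable_prodMeasure _) (integrable_prodMeasure _)]
    _ ≤ ∫ ω, tcNorm n d (fun x => nuMeas n d k {x} ω) ∂prodMeasure d k := by
        refine integral_mono_ae (integrable_prodMeasure _) (integrable_prodMeasure _) ?_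
        filter_upwards [ae_prodMeasure] with ω hω
        exact card_isIsolatedSource_sub_abs_sum_le_tcNorm hkn hω

/-- `E[‖ν_k‖_TC] ≥ (7/48)·d·2^n` for `24 ≤ k ≤ n`. Here `ν_k` is viewed as the signed
measure on the grid with point masses `x ↦ ν_k({x})`. -/
theorem expected_tc_norm_ge (n d k : ℕ) (hd : 3 ≤ d) (hk : 24 ≤ k) (hkn : k ≤ n) :
    ∫ ω, tcNorm n d (fun x => nuMeas n d k {x} ω) ∂(prodMeasure d k)
      ≥ (7/48) * (d:ℝ) * 2^n := by
  have hfactor := seven_div_sixteen_le_sub_inv_sqrt hd (show 8 ≤ k by omega)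
  calc 7 / 48 * (d : ℝ) * 2 ^ n = d / 3 * 2 ^ n * (7 / 16) := by ring
    _ ≤ _ := by gcongr
    _ ≤ _ := expected_tc_norm_ge_general n d k hkn
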